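/- Let γ = −8. There exists a constant C > 0 such that |G(x,t)| ≤ C (1+|t|)^{−1/2} log(2+|t|) for all x ∈ ℤ² and all t ∈ ℝ. -/

import Mathlib

open MeasureTheory

/-- `ω(ξ) = sqrt((2 − 2cos ξ₁) + (2 − 2cos ξ₂))`. -/
noncomputable def om (ξ : ℝ × ℝ) : ℝ :=
  Real.sqrt ((2 - 2 * Real.cos ξ.1) + (2 - 2 * Real.cos ξ.2))

/-- The fundamental solution of the discrete fourth-order Schrödinger equation
`i∂ₜu + Δ²u − γΔu = 0` on the lattice `ℤ²`. -/
noncomputable def G2 (γ : ℝ) (x : ℤ × ℤ) (t : ℝ) : ℂ :=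
  ((((2 * Real.pi) ^ 2)⁻¹ : ℝ) : ℂ) *
    ∫ ξ in Set.Icc (-Real.pi) Real.pi ×ˢ Set.Icc (-Real.pi) Real.pi,
      Complex.exp (Complex.I *
        (((x.1 : ℝ) * ξ.1 + (x.2 : ℝ) * ξ.2 + (om ξ ^ 4 + γ * om ξ ^ 2) * t : ℝ) : ℂ))

open Real in
lemma arctan_int (T y α β : ℝ) (hT : T ≠ 0) :
    ∫ a in α..β, sin (2 * a) * (1 + (T * (y - cos a ^ 2) / 2) ^ 2)⁻¹ ≤ 2 * π / |T| := by
  have h : ∀ a : ℝ, HasDerivAt (fun a => 2 / T * arctan (T * (y - cos a ^ 2) / 2))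
      (sin (2 * a) * (1 + (T * (y - cos a ^ 2) / 2) ^ 2)⁻¹) a := by
    intro a
    have h1 : HasDerivAt (fun a => T * (y - cos a ^ 2) / 2) (T * sin (2 * a) / 2) a := by
      have := ((((hasDerivAt_cos a).pow 2).const_sub y).const_mul T).div_const 2
      refine this.congr_deriv ?_
      rw [sin_two_mul]; push_cast; ring
    refine (h1.arctan.const_mul (2 / T)).congr_deriv ?_
    field_simp
  have hpos : ∀ a : ℝ, (1 + (T * (y - cos a ^ 2) / 2) ^ 2) ≠ 0 := fun a => by positivity
  rw [intervalIntegral.integral_eq_sub_of_hasDerivAt (fun a _ => h a)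
    (Continuous.intervalIntegrable (by fun_prop (disch := assumption)) _ _)]
  rw [← mul_sub]
  refine (le_abs_self _).trans ?_
  rw [abs_mul, abs_div, abs_two, show 2 * π / |T| = 2 / |T| * π by ring]
  refine mul_le_mul_of_nonneg_left ?_ (by positivity)
  rw [abs_le]
  have := arctan_lt_pi_div_two (T * (y - cos α ^ 2) / 2)
  have := arctan_lt_pi_div_two (T * (y - cos β ^ 2) / 2)
  have := neg_pi_div_two_lt_arctan (T * (y - cos α ^ 2) / 2)
  have := neg_pi_div_two_lt_arctan (T * (y - cos β ^ 2) / 2)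
  constructor <;> linarith

open Real in
lemma sin_two_pos' {δ a : ℝ} (hδ : 0 < δ) (ha : a ∈ Set.Icc δ (π / 2 - δ)) :
    0 < sin a ∧ 0 < cos a ∧ 0 < sin (2 * a) := by
  obtain ⟨h1, h2⟩ := ha
  refine ⟨sin_pos_of_pos_of_lt_pi (by linarith) (by linarith [pi_pos]),
    cos_pos_of_mem_Ioo ⟨by linarith [pi_pos], by linarith⟩,
    sin_pos_of_pos_of_lt_pi (by linarith) (by linarith [pi_pos])⟩

open Real in
lemma log_int (δ : ℝ) (hδ : 0 < δ) (hδ' : δ ≤ π / 4) :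
    IntervalIntegrable (fun a => (sin (2 * a))⁻¹) volume δ (π / 2 - δ) ∧
    ∫ a in δ..(π / 2 - δ), (sin (2 * a))⁻¹ ≤ log (π / (2 * δ)) := by
  have hle : δ ≤ π / 2 - δ := by linarith
  have hI : IntervalIntegrable (fun a => (sin (2 * a))⁻¹) volume δ (π / 2 - δ) := by
    apply ContinuousOn.intervalIntegrable
    rw [Set.uIcc_of_le hle]
    refine ContinuousOn.inv₀ (by fun_prop) fun a ha => (sin_two_pos' hδ ha).2.2.ne'
  refine ⟨hI, ?_⟩
  have h : ∀ a ∈ Set.uIcc δ (π / 2 - δ), HasDerivAt (fun a => (log (sin a) - log (cos a)) / 2)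
      ((sin (2 * a))⁻¹) a := by
    intro a ha
    rw [Set.uIcc_of_le hle] at ha
    obtain ⟨h1, h2, h3⟩ := sin_two_pos' hδ ha
    refine ((((hasDerivAt_sin a).log h1.ne').sub
      ((hasDerivAt_cos a).log h2.ne')).div_const 2).congr_deriv ?_
    rw [sin_two_mul]
    field_simp
    linarith [sin_sq_add_cos_sq a]
  rw [intervalIntegral.integral_eq_sub_of_hasDerivAt h hI, sin_pi_div_two_sub, cos_pi_div_two_sub]
  have h1 : log (cos δ) ≤ 0 := log_nonpos (sin_two_pos' hδ ⟨le_rfl, hle⟩).2.1.le (cos_le_one _)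
  have h2 : log (2 / π * δ) ≤ log (sin δ) :=
    log_le_log (by positivity) (mul_le_sin hδ.le (by linarith))
  have h3 : log (π / (2 * δ)) = - log (2 / π * δ) := by
    rw [← log_inv]; congr 1; field_simp
  linarith

open Real in
lemma schur (T δ : ℝ) (hT : T ≠ 0) (hδ : 0 < δ) (hδ' : δ ≤ π / 4) :
    ∫ z, (1 + (T * (cos z.1 ^ 2 - cos z.2 ^ 2) / 2) ^ 2)⁻¹
      ∂((volume.restrict (Set.Ioc δ (π / 2 - δ))).prod (volume.restrict (Set.Ioc δ (π / 2 - δ))))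
      ≤ 2 * π / |T| * log (π / (2 * δ)) := by
  have hle : δ ≤ π / 2 - δ := by linarith
  set μ := (volume.restrict (Set.Ioc δ (π / 2 - δ))) with hμ
  set k : ℝ × ℝ → ℝ := fun z => (1 + (T * (cos z.1 ^ 2 - cos z.2 ^ 2) / 2) ^ 2)⁻¹ with hk
  have hpos : ∀ z : ℝ × ℝ, (1 + (T * (cos z.1 ^ 2 - cos z.2 ^ 2) / 2) ^ 2) ≠ 0 :=
    fun z => by positivity
  have hkc : Continuous k := by
    rw [hk]; fun_prop (disch := assumption)
  have hk0 : ∀ z, 0 ≤ k z := fun z => by simp only [hk]; positivity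
  have hk1 : ∀ z, k z ≤ 1 := fun z => by
    simp only [hk]; apply inv_le_one_of_one_le₀; nlinarith [sq_nonneg (T * (cos z.1 ^ 2 - cos z.2 ^ 2) / 2)]
  have hIinv : Integrable (fun a => (sin (2 * a))⁻¹) μ := by
    have := (log_int δ hδ hδ').1
    rwa [intervalIntegrable_iff_integrableOn_Ioc_of_le hle] at this
  have hIsin : Integrable (fun a => sin (2 * a)) μ := by
    have : IntervalIntegrable (fun a => sin (2 * a)) volume δ (π / 2 - δ) :=
      Continuous.intervalIntegrable (by fun_prop) _ _
    rwa [intervalIntegrable_iff_integrableOn_Ioc_of_le hle] at this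
  have hIg : Integrable (fun z : ℝ × ℝ => (sin (2 * z.1))⁻¹ * sin (2 * z.2) * k z) (μ.prod μ) := by
    refine (hIinv.mul_prod hIsin).mul_bdd (c := 1) hkc.aestronglyMeasurable ?_
    filter_upwards with z
    rw [Real.norm_eq_abs, abs_of_nonneg (hk0 z)]; exact hk1 z
  have hIg' : Integrable (fun z : ℝ × ℝ => (sin (2 * z.2))⁻¹ * sin (2 * z.1) * k z) (μ.prod μ) := by
    have := hIg.swap
    refine this.congr (Filter.Eventually.of_forall fun z => ?_)
    simp only [Function.comp, Prod.fst_swap, Prod.snd_swap, hk]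
    congr 3; ring
  have heq : ∫ z, (sin (2 * z.2))⁻¹ * sin (2 * z.1) * k z ∂(μ.prod μ)
      = ∫ z, (sin (2 * z.1))⁻¹ * sin (2 * z.2) * k z ∂(μ.prod μ) := by
    rw [← integral_prod_swap]
    refine integral_congr_ae (Filter.Eventually.of_forall fun z => ?_)
    simp only [Prod.fst_swap, Prod.snd_swap, hk]
    congr 3; ring
  have hbd : ∫ z, (sin (2 * z.1))⁻¹ * sin (2 * z.2) * k z ∂(μ.prod μ)
      ≤ 2 * π / |T| * log (π / (2 * δ)) := by
    rw [integral_prod _ hIg]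
    calc _ ≤ ∫ a, 2 * π / |T| * (sin (2 * a))⁻¹ ∂μ := by
          refine integral_mono_ae hIg.integral_prod_left (hIinv.const_mul _) ?_
          filter_upwards [ae_restrict_mem measurableSet_Ioc] with a ha
          simp only [mul_assoc]
          rw [integral_const_mul, mul_comm]
          have hs := (sin_two_pos' hδ ⟨ha.1.le, ha.2⟩).2.2
          have := arctan_int T (cos a ^ 2) δ (π / 2 - δ) hT
          rw [intervalIntegral.integral_of_le hle] at this
          exact (mul_le_mul_of_nonneg_right this (inv_nonneg.2 hs.le)).trans_eq (by ring)
      _ ≤ _ := by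
          rw [integral_const_mul]
          have := (log_int δ hδ hδ').2
          rw [intervalIntegral.integral_of_le hle] at this
          gcongr
  have hmem : ∀ᵐ z ∂(μ.prod μ), z ∈ Set.Ioc δ (π / 2 - δ) ×ˢ Set.Ioc δ (π / 2 - δ) := by
    rw [hμ, Measure.prod_restrict]
    exact ae_restrict_mem (measurableSet_Ioc.prod measurableSet_Ioc)
  have hkI : Integrable k (μ.prod μ) := by
    refine Integrable.of_bound hkc.aestronglyMeasurable 1 ?_
    filter_upwards with z
    rw [Real.norm_eq_abs, abs_of_nonneg (hk0 z)]; exact hk1 z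
  calc ∫ z, k z ∂(μ.prod μ) ≤ ∫ z, (1/2) * ((sin (2 * z.1))⁻¹ * sin (2 * z.2) * k z
        + (sin (2 * z.2))⁻¹ * sin (2 * z.1) * k z) ∂(μ.prod μ) := by
        refine integral_mono_ae hkI ((hIg.add hIg').const_mul _) ?_
        filter_upwards [hmem] with z hz
        have h1 := (sin_two_pos' hδ ⟨hz.1.1.le, hz.1.2⟩).2.2
        have h2 := (sin_two_pos' hδ ⟨hz.2.1.le, hz.2.2⟩).2.2
        rw [← add_mul, ← mul_assoc]
        apply le_mul_of_one_le_left (hk0 z)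
        have : 1 / 2 * ((sin (2 * z.1))⁻¹ * sin (2 * z.2) + (sin (2 * z.2))⁻¹ * sin (2 * z.1)) - 1
          = (sin (2 * z.1) - sin (2 * z.2)) ^ 2 / (2 * sin (2 * z.1) * sin (2 * z.2)) := by
          field_simp; ring
        have : 0 ≤ (sin (2 * z.1) - sin (2 * z.2)) ^ 2 / (2 * sin (2 * z.1) * sin (2 * z.2)) := by
          positivity
        linarith
    _ ≤ _ := by
        rw [integral_const_mul, integral_add hIg hIg', heq]
        linarith

/-- Unimodular exponential. -/
noncomputable def EE (θ : ℝ) : ℂ := Complex.exp (Complex.I * (θ : ℂ))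

lemma EE_norm (θ : ℝ) : ‖EE θ‖ = 1 := by
  rw [EE, mul_comm, Complex.norm_exp_ofReal_mul_I]

lemma EE_add (θ η : ℝ) : EE (θ + η) = EE θ * EE η := by
  simp only [EE]; rw [← Complex.exp_add]; push_cast; ring_nf

lemma EE_conj (θ : ℝ) : (starRingEnd ℂ) (EE θ) = EE (-θ) := by
  simp only [EE]; rw [← Complex.exp_conj]; simp

@[fun_prop]
lemma EE_cont : Continuous EE := by unfold EE; fun_prop

/-- Inner oscillatory integral. -/
noncomputable def FF (m T δ c : ℝ) : ℂ :=
  ∫ a in Set.Ioc δ (Real.pi / 2 - δ), EE (m * a + T * c * Real.cos a ^ 2)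

lemma FF_cont (m T δ : ℝ) : Continuous (FF m T δ) := by
  unfold FF
  refine continuous_of_dominated (bound := fun _ => 1) (fun c => ?_) (fun c => ?_) ?_ ?_
  · exact Continuous.aestronglyMeasurable (by fun_prop)
  · filter_upwards with a; rw [EE_norm]
  · exact integrable_const _
  · filter_upwards with a; fun_prop

open Real in
lemma FF_sq (m T δ : ℝ) (hT : T ≠ 0) (hδ : 0 < δ) (hδ' : δ ≤ π / 4) :
    Integrable (fun c => exp (-c ^ 2) * ‖FF m T δ c‖ ^ 2) ∧
    ∫ c, exp (-c ^ 2) * ‖FF m T δ c‖ ^ 2 ≤ √π * (2 * π / |T| * log (π / (2 * δ))) := by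
  set μ := (volume.restrict (Set.Ioc δ (π / 2 - δ))) with hμ
  have hgI : Integrable (fun c : ℝ => exp (-c ^ 2)) := by
    simpa using integrable_exp_neg_mul_sq (b := 1) one_pos
  let H : ℝ → ℝ × ℝ → ℂ := fun c z => (exp (-c ^ 2) : ℂ) *
    EE (m * (z.1 - z.2) + T * c * (cos z.1 ^ 2 - cos z.2 ^ 2))
  have hHc : Continuous (Function.uncurry H) := by
    simp only [Function.uncurry_def, H]; fun_prop
  have hHn : ∀ c z, ‖H c z‖ = exp (-c ^ 2) := by
    intro c z
    simp only [H, norm_mul, EE_norm, mul_one, Complex.norm_real, norm_eq_abs, abs_exp]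
  have hHI : Integrable (Function.uncurry H) (volume.prod (μ.prod μ)) := by
    have h1 : Integrable (fun z : ℝ × (ℝ × ℝ) => exp (-z.1 ^ 2) * (1 : ℝ)) (volume.prod (μ.prod μ)) :=
      hgI.mul_prod (integrable_const (1 : ℝ))
    refine h1.mono' hHc.aestronglyMeasurable ?_
    filter_upwards with z
    simp [Function.uncurry_def, hHn]
  have key : ∀ c, ((exp (-c ^ 2) * ‖FF m T δ c‖ ^ 2 : ℝ) : ℂ) = ∫ z, H c z ∂(μ.prod μ) := by
    intro c
    simp only [H]
    rw [integral_const_mul]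
    push_cast
    congr 1
    rw [← Complex.mul_conj']
    simp only [FF]
    rw [← integral_conj, ← integral_prod_mul]
    refine integral_congr_ae (Filter.Eventually.of_forall fun z => ?_)
    simp only [EE_conj]
    rw [← EE_add]; congr 1; ring
  have hI : Integrable (fun c => exp (-c ^ 2) * ‖FF m T δ c‖ ^ 2) := by
    have := hHI.integral_prod_left
    simp only [Function.uncurry_def] at this
    have h2 := this.norm
    refine h2.congr (Filter.Eventually.of_forall fun c => ?_)
    simp only
    rw [← key, Complex.norm_real, norm_of_nonneg (by positivity)]
  refine ⟨hI, ?_⟩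
  have hin : ∀ z : ℝ × ℝ, ‖∫ c, H c z‖ ≤ √π * (1 + (T * (cos z.1 ^ 2 - cos z.2 ^ 2) / 2) ^ 2)⁻¹ := by
    intro z
    set l := T * (cos z.1 ^ 2 - cos z.2 ^ 2) with hl
    have h1 : ∀ c : ℝ, H c z = EE (m * (z.1 - z.2)) *
        (Complex.exp (Complex.I * (l : ℂ) * c) * Complex.exp (-(1 : ℂ) * (c : ℂ) ^ 2)) := by
      intro c
      simp only [H]
      rw [EE_add, mul_comm, mul_assoc]
      congr 2
      · simp only [EE, hl]; congr 1; push_cast; ring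
      · push_cast; ring_nf
    simp_rw [h1]
    rw [integral_const_mul, fourierIntegral_gaussian (by simp), norm_mul, EE_norm, one_mul, norm_mul]
    have h2 : ‖((π : ℂ) / 1) ^ (1 / 2 : ℂ)‖ = √π := by
      rw [div_one, show (1 / 2 : ℂ) = ((1 / 2 : ℝ) : ℂ) by push_cast; ring,
        ← Complex.ofReal_cpow pi_pos.le, Complex.norm_real, norm_of_nonneg (by positivity),
        sqrt_eq_rpow]
    rw [h2]
    refine mul_le_mul_of_nonneg_left ?_ (by positivity)
    rw [show (-(l : ℂ) ^ 2 / (4 * 1)) = ((-(l / 2) ^ 2 : ℝ) : ℂ) by push_cast; ring,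
      ← Complex.ofReal_exp, Complex.norm_real, norm_of_nonneg (by positivity), exp_neg]
    refine inv_anti₀ (by positivity) ?_
    linarith [add_one_le_exp ((l / 2) ^ 2)]
  have hreal : (∫ c, exp (-c ^ 2) * ‖FF m T δ c‖ ^ 2) = ‖∫ z, (∫ c, H c z) ∂(μ.prod μ)‖ := by
    rw [← integral_integral_swap hHI]
    simp_rw [← key]
    rw [integral_complex_ofReal, Complex.norm_real, norm_of_nonneg (integral_nonneg fun c => by positivity)]
  rw [hreal]
  refine (norm_integral_le_integral_norm _).trans ?_
  refine le_trans ?_ (mul_le_mul_of_nonneg_left (schur T δ hT hδ hδ') (sqrt_nonneg π))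
  rw [← integral_const_mul]
  have hpos : ∀ z : ℝ × ℝ, (1 + (T * (cos z.1 ^ 2 - cos z.2 ^ 2) / 2) ^ 2) ≠ 0 :=
    fun z => by positivity
  refine integral_mono hHI.integral_prod_right.norm ?_ hin
  refine Integrable.const_mul ?_ _
  refine Integrable.of_bound (Continuous.aestronglyMeasurable (by fun_prop (disch := assumption))) 1 ?_
  filter_upwards with z
  rw [norm_inv]
  apply inv_le_one_of_one_le₀
  rw [norm_of_nonneg (by positivity)]
  linarith [sq_nonneg (T * (cos z.1 ^ 2 - cos z.2 ^ 2) / 2)]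

open Real in
lemma FF_sq_b (m T δ : ℝ) (hT : T ≠ 0) (hδ : 0 < δ) (hδ' : δ ≤ π / 4) :
    ∫ b in δ..(π / 2 - δ), sin (2 * b) * ‖FF m T δ (cos b ^ 2)‖ ^ 2
      ≤ exp 1 * (√π * (2 * π / |T| * log (π / (2 * δ)))) := by
  have hle : δ ≤ π / 2 - δ := by linarith
  have hFc := FF_cont m T δ
  have h1 : ∀ b ∈ Set.uIcc δ (π / 2 - δ), HasDerivAt (fun b => - cos b ^ 2) (sin (2 * b)) b := by
    intro b _
    refine ((hasDerivAt_cos b).pow 2).neg.congr_deriv ?_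
    rw [sin_two_mul]; push_cast; ring
  have h2 := intervalIntegral.integral_comp_mul_deriv (g := fun c => ‖FF m T δ (-c)‖ ^ 2) h1
    (Continuous.continuousOn (by fun_prop)) (by fun_prop)
  simp only [Function.comp_def, neg_neg] at h2
  simp_rw [mul_comm (sin _)]
  rw [h2, intervalIntegral.integral_comp_neg (fun c => ‖FF m T δ c‖ ^ 2), neg_neg, neg_neg,
    cos_pi_div_two_sub]
  have hm : sin δ ^ 2 ≤ cos δ ^ 2 := by
    have a1 : sin δ ≤ cos δ := by
      rw [← cos_pi_div_two_sub]
      exact cos_le_cos_of_nonneg_of_le_pi hδ.le (by linarith) hle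
    have a2 := (sin_two_pos' hδ ⟨le_rfl, hle⟩).1
    gcongr
  obtain ⟨hI, hb⟩ := FF_sq m T δ hT hδ hδ'
  refine le_trans ?_ (mul_le_mul_of_nonneg_left hb (exp_pos 1).le)
  rw [intervalIntegral.integral_of_le hm, ← integral_const_mul]
  calc _ ≤ ∫ c in Set.Ioc (sin δ ^ 2) (cos δ ^ 2), exp 1 * (exp (-c ^ 2) * ‖FF m T δ c‖ ^ 2) := by
        refine setIntegral_mono_on ?_ (hI.const_mul _).integrableOn measurableSet_Ioc ?_
        · exact (Continuous.integrableOn_Icc (by fun_prop)).mono_set Set.Ioc_subset_Icc_self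
        · intro c hc
          rw [← mul_assoc, ← exp_add]
          refine le_mul_of_one_le_left (by positivity) (one_le_exp ?_)
          have : 0 ≤ c := (sq_nonneg _).trans hc.1.le
          have : c ≤ 1 := hc.2.trans (cos_sq_le_one _)
          nlinarith
    _ ≤ _ := setIntegral_le_integral (hI.const_mul _)
        (Filter.Eventually.of_forall fun c => by positivity)

open Real in
lemma FF_int (m T δ : ℝ) (hT : T ≠ 0) (hδ : 0 < δ) (hδ' : δ ≤ π / 4) :
    ∫ b in δ..(π / 2 - δ), ‖FF m T δ (cos b ^ 2)‖
      ≤ (1 + exp 1 * (√π * (2 * π))) * log (π / (2 * δ)) / √|T| := by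
  have hle : δ ≤ π / 2 - δ := by linarith
  have hFc := FF_cont m T δ
  obtain ⟨hI, hl⟩ := log_int δ hδ hδ'
  have h2 := FF_sq_b m T δ hT hδ hδ'
  have hs : 0 < √|T| := by positivity
  have hI2 : IntervalIntegrable (fun b => sin (2 * b) * ‖FF m T δ (cos b ^ 2)‖ ^ 2)
    volume δ (π / 2 - δ) := Continuous.intervalIntegrable (by fun_prop) _ _
  have hss : √|T| ^ 2 = |T| := sq_sqrt (abs_nonneg T)
  calc _ ≤ ∫ b in δ..(π / 2 - δ), ((√|T|)⁻¹ * (sin (2 * b))⁻¹ +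
        √|T| * (sin (2 * b) * ‖FF m T δ (cos b ^ 2)‖ ^ 2)) := by
        refine intervalIntegral.integral_mono_on hle (Continuous.intervalIntegrable (by fun_prop) _ _)
          ((hI.const_mul _).add (hI2.const_mul _)) ?_
        intro b hb
        have hsin := (sin_two_pos' hδ hb).2.2
        set u := ‖FF m T δ (cos b ^ 2)‖
        set s := √|T| * sin (2 * b) with hsdef
        have hs0 : 0 < s := by positivity
        have : (√|T|)⁻¹ * (sin (2 * b))⁻¹ + √|T| * (sin (2 * b) * u ^ 2) - u
            = ((s * u - 1 / 2) ^ 2 + 3 / 4) / s := by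
          rw [← mul_inv, ← mul_assoc, ← hsdef]; field_simp; ring
        have : 0 ≤ ((s * u - 1 / 2) ^ 2 + 3 / 4) / s := by positivity
        linarith
    _ = (√|T|)⁻¹ * (∫ b in δ..(π / 2 - δ), (sin (2 * b))⁻¹) +
        √|T| * ∫ b in δ..(π / 2 - δ), sin (2 * b) * ‖FF m T δ (cos b ^ 2)‖ ^ 2 := by
        rw [intervalIntegral.integral_add (hI.const_mul _) (hI2.const_mul _),
          intervalIntegral.integral_const_mul, intervalIntegral.integral_const_mul]
    _ ≤ (√|T|)⁻¹ * log (π / (2 * δ)) +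
        √|T| * (exp 1 * (√π * (2 * π / |T| * log (π / (2 * δ))))) := by gcongr
    _ = _ := by
        rw [← hss]; simp only [sqrt_sq hs.le]
        field_simp

open Real in
lemma quarter (m n T δ : ℝ) (hT : T ≠ 0) (hδ : 0 < δ) (hδ' : δ ≤ π / 4) :
    ‖∫ b in (0 : ℝ)..(π / 2), ∫ a in (0 : ℝ)..(π / 2), EE (m * a + n * b + T * (cos a * cos b) ^ 2)‖
      ≤ 2 * π * δ + (1 + exp 1 * (√π * (2 * π))) * log (π / (2 * δ)) / √|T| := by
  have hle : δ ≤ π / 2 - δ := by linarith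
  have hFc := FF_cont m T δ
  set g : ℝ → ℝ → ℂ := fun b a => EE (m * a + n * b + T * (cos a * cos b) ^ 2) with hg
  have hgc : Continuous (Function.uncurry g) := by
    simp only [Function.uncurry_def, hg]; fun_prop
  have hga : ∀ b u v, IntervalIntegrable (g b) volume u v := fun b u v =>
    Continuous.intervalIntegrable (by simp only [hg]; fun_prop) _ _
  have hin : ∀ b (u v : ℝ), ‖∫ a in u..v, g b a‖ ≤ |v - u| := by
    intro b u v
    refine (intervalIntegral.norm_integral_le_of_norm_le_const (C := 1) ?_).trans (by simp)
    intro a _; simp only [hg, EE_norm]; exact le_rfl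
  have hG : Continuous fun b => ∫ a in (0 : ℝ)..(π / 2), g b a :=
    intervalIntegral.continuous_parametric_intervalIntegral_of_continuous' hgc _ _
  have hGi : ∀ u v, IntervalIntegrable (fun b => ∫ a in (0 : ℝ)..(π / 2), g b a) volume u v :=
    fun u v => hG.intervalIntegrable _ _
  have hp2 : |π / 2 - 0| = π / 2 := by rw [sub_zero, abs_of_pos (by positivity)]
  have hout : ∀ u v : ℝ, ‖∫ b in u..v, ∫ a in (0 : ℝ)..(π / 2), g b a‖ ≤ π / 2 * |v - u| := by
    intro u v
    refine intervalIntegral.norm_integral_le_of_norm_le_const ?_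
    intro b _; exact (hin b _ _).trans_eq hp2
  have hmid : ∀ b, ‖∫ a in (0 : ℝ)..(π / 2), g b a‖ ≤ 2 * δ + ‖FF m T δ (cos b ^ 2)‖ := by
    intro b
    rw [← intervalIntegral.integral_add_adjacent_intervals (hga b 0 δ) (hga b δ (π / 2)),
      ← intervalIntegral.integral_add_adjacent_intervals (hga b δ (π / 2 - δ))
        (hga b (π / 2 - δ) (π / 2))]
    have e1 := hin b 0 δ
    have e2 := hin b (π / 2 - δ) (π / 2)
    rw [sub_zero, abs_of_pos hδ] at e1
    rw [sub_sub_cancel, abs_of_pos hδ] at e2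
    have e3 : ‖∫ a in δ..(π / 2 - δ), g b a‖ = ‖FF m T δ (cos b ^ 2)‖ := by
      have : ∀ a, g b a = EE (n * b) * EE (m * a + T * cos b ^ 2 * cos a ^ 2) := by
        intro a; simp only [hg]; rw [← EE_add]; congr 1; ring
      simp_rw [this]
      rw [intervalIntegral.integral_const_mul, norm_mul, EE_norm, one_mul,
        intervalIntegral.integral_of_le hle]
      rfl
    refine (norm_add_le _ _).trans ?_
    have := norm_add_le (∫ a in δ..(π / 2 - δ), g b a) (∫ a in (π / 2 - δ)..(π / 2), g b a)
    linarith
  rw [← intervalIntegral.integral_add_adjacent_intervals (hGi 0 δ) (hGi δ (π / 2)),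
      ← intervalIntegral.integral_add_adjacent_intervals (hGi δ (π / 2 - δ))
        (hGi (π / 2 - δ) (π / 2))]
  have e1 := hout 0 δ
  have e2 := hout (π / 2 - δ) (π / 2)
  rw [sub_zero, abs_of_pos hδ] at e1
  rw [sub_sub_cancel, abs_of_pos hδ] at e2
  have e3 : ‖∫ b in δ..(π / 2 - δ), ∫ a in (0 : ℝ)..(π / 2), g b a‖ ≤
      (π / 2 - δ - δ) * (2 * δ) + ∫ b in δ..(π / 2 - δ), ‖FF m T δ (cos b ^ 2)‖ := by
    refine (intervalIntegral.norm_integral_le_integral_norm hle).trans ?_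
    have hi : IntervalIntegrable (fun b => ‖FF m T δ (cos b ^ 2)‖) volume δ (π / 2 - δ) :=
      Continuous.intervalIntegrable (by fun_prop) _ _
    refine (intervalIntegral.integral_mono_on hle (hGi _ _).norm
      (intervalIntegrable_const.add hi) (fun b _ => hmid b)).trans_eq ?_
    rw [intervalIntegral.integral_add intervalIntegrable_const hi, intervalIntegral.integral_const,
      smul_eq_mul]
  have e4 := FF_int m T δ hT hδ hδ'
  refine (norm_add_le _ _).trans ?_
  have e5 := norm_add_le (∫ b in δ..(π / 2 - δ), ∫ a in (0 : ℝ)..(π / 2), g b a)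
    (∫ b in (π / 2 - δ)..(π / 2), ∫ a in (0 : ℝ)..(π / 2), g b a)
  nlinarith

open Real in
lemma fold_a (h : ℝ → ℂ) (hc : Continuous h) :
    ∫ a in (-(π / 2))..(π / 2), h a
      = (∫ a in (0 : ℝ)..(π / 2), h a) + ∫ a in (0 : ℝ)..(π / 2), h (-a) := by
  rw [intervalIntegral.integral_comp_neg, neg_zero, add_comm,
    intervalIntegral.integral_add_adjacent_intervals (hc.intervalIntegrable _ _)
      (hc.intervalIntegrable _ _)]

open Real in
lemma fold_b (g : ℝ → ℂ) (hc : Continuous g) :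
    ∫ b in (-π)..π, g b
      = (∫ b in (0 : ℝ)..(π / 2), g (b - π)) + (∫ b in (0 : ℝ)..(π / 2), g (-b)) +
        (∫ b in (0 : ℝ)..(π / 2), g b) + ∫ b in (0 : ℝ)..(π / 2), g (π - b) := by
  have hi : ∀ u v, IntervalIntegrable g volume u v := fun u v => hc.intervalIntegrable _ _
  rw [intervalIntegral.integral_comp_neg, intervalIntegral.integral_comp_sub_left,
    intervalIntegral.integral_comp_sub_right, neg_zero, zero_sub, sub_zero,
    show π / 2 - π = -(π / 2) by ring, show π - π / 2 = π / 2 by ring,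
    intervalIntegral.integral_add_adjacent_intervals (hi _ _) (hi _ _),
    intervalIntegral.integral_add_adjacent_intervals (hi _ _) (hi _ _),
    intervalIntegral.integral_add_adjacent_intervals (hi _ _) (hi _ _)]

open Real in
lemma half_bd (T K : ℝ) (hK : ∀ m n : ℝ, ‖∫ b in (0 : ℝ)..(π / 2), ∫ a in (0 : ℝ)..(π / 2),
      EE (m * a + n * b + T * (cos a * cos b) ^ 2)‖ ≤ K) (m n : ℝ) :
    ‖∫ b in (0 : ℝ)..(π / 2), ∫ a in (-(π / 2))..(π / 2),
      EE (m * a + n * b + T * (cos a * cos b) ^ 2)‖ ≤ 2 * K := by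
  have h1 : ∀ b : ℝ, ∫ a in (-(π / 2))..(π / 2), EE (m * a + n * b + T * (cos a * cos b) ^ 2)
      = (∫ a in (0 : ℝ)..(π / 2), EE (m * a + n * b + T * (cos a * cos b) ^ 2)) +
        ∫ a in (0 : ℝ)..(π / 2), EE ((-m) * a + n * b + T * (cos a * cos b) ^ 2) := by
    intro b
    rw [fold_a _ (by fun_prop)]
    simp only [cos_neg, mul_neg, neg_mul]
  simp_rw [h1]
  have hc : ∀ m : ℝ, Continuous fun b =>
      ∫ a in (0 : ℝ)..(π / 2), EE (m * a + n * b + T * (cos a * cos b) ^ 2) := fun m =>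
    intervalIntegral.continuous_parametric_intervalIntegral_of_continuous' (by fun_prop) _ _
  rw [intervalIntegral.integral_add ((hc m).intervalIntegrable _ _)
    ((hc (-m)).intervalIntegrable _ _)]
  refine (norm_add_le _ _).trans ?_
  linarith [hK m n, hK (-m) n]

open Real in
lemma full_bd (T K : ℝ) (hK : ∀ m n : ℝ, ‖∫ b in (0 : ℝ)..(π / 2), ∫ a in (0 : ℝ)..(π / 2),
      EE (m * a + n * b + T * (cos a * cos b) ^ 2)‖ ≤ K) (m n : ℝ) :
    ‖∫ b in (-π)..π, ∫ a in (-(π / 2))..(π / 2),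
      EE (m * a + n * b + T * (cos a * cos b) ^ 2)‖ ≤ 8 * K := by
  have hh := half_bd T K hK m
  rw [fold_b _ (intervalIntegral.continuous_parametric_intervalIntegral_of_continuous'
    (by fun_prop) _ _)]
  have key : ∀ (θ n' : ℝ), ‖∫ b in (0 : ℝ)..(π / 2), ∫ a in (-(π / 2))..(π / 2),
      EE (θ + (m * a + n' * b + T * (cos a * cos b) ^ 2))‖ ≤ 2 * K := by
    intro θ n'
    simp_rw [EE_add θ, intervalIntegral.integral_const_mul]
    rw [norm_mul, EE_norm, one_mul]
    exact hh n'
  have k1 := key (n * (-π)) n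
  have k2 := key 0 (-n)
  have k3 := key 0 n
  have k4 := key (n * π) (-n)
  have f1 : ∀ a b : ℝ, m * a + n * (b - π) + T * (cos a * cos (b - π)) ^ 2
     = n * (-π) + (m * a + n * b + T * (cos a * cos b) ^ 2) := by
    intro a b; rw [cos_sub_pi]; ring
  have f2 : ∀ a b : ℝ, m * a + n * (-b) + T * (cos a * cos (-b)) ^ 2
     = 0 + (m * a + (-n) * b + T * (cos a * cos b) ^ 2) := by
    intro a b; rw [cos_neg]; ring
  have f3 : ∀ a b : ℝ, m * a + n * b + T * (cos a * cos b) ^ 2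
     = 0 + (m * a + n * b + T * (cos a * cos b) ^ 2) := by
    intro a b; ring
  have f4 : ∀ a b : ℝ, m * a + n * (π - b) + T * (cos a * cos (π - b)) ^ 2
     = n * π + (m * a + (-n) * b + T * (cos a * cos b) ^ 2) := by
    intro a b; rw [cos_pi_sub]; ring
  simp only [← f1] at k1
  simp only [← f2] at k2
  simp only [← f3] at k3
  simp only [← f4] at k4
  refine (norm_add_le _ _).trans ?_
  refine (add_le_add_left (norm_add_le _ _) _).trans ?_
  refine (add_le_add_left (add_le_add_left (norm_add_le _ _) _) _).trans ?_
  linarith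

lemma EE_int_mul (k : ℤ) (θ : ℝ) : EE (θ + k * (2 * Real.pi)) = EE θ := by
  rw [EE_add]
  have : EE (k * (2 * Real.pi)) = 1 := by
    simp only [EE]
    rw [← Complex.exp_int_mul_two_pi_mul_I k]; congr 1; push_cast; ring
  rw [this, mul_one]

open Real in
lemma per_shift (h : ℝ → ℂ) (hp : Function.Periodic h (2 * π)) (s : ℝ) :
    ∫ p in (-π)..π, h (p + s) = ∫ p in (-π)..π, h p := by
  rw [intervalIntegral.integral_comp_add_right]
  have := hp.intervalIntegral_add_eq (-π + s) (-π)
  rw [show -π + s + 2 * π = π + s by ring, show -π + 2 * π = π by ring] at this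
  exact this

open Real in
lemma G2_eq (x : ℤ × ℤ) (t : ℝ) :
    ‖G2 (-8) x t‖ = ((2 * π) ^ 2)⁻¹ * (2 * ‖∫ b in (-π)..π, ∫ a in (-(π / 2))..(π / 2),
      EE (((x.1 : ℝ) + x.2) * a + ((x.1 : ℝ) - x.2) * b + (16 * t) * (cos a * cos b) ^ 2)‖) := by
  have hpp : -π ≤ π := by linarith [pi_pos]
  set f : ℝ → ℝ → ℂ := fun u v => EE (x.1 * u + x.2 * v + 4 * t * (cos u + cos v) ^ 2) with hf
  have hfc : Continuous (Function.uncurry f) := by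
    simp only [Function.uncurry_def, hf]; fun_prop
  have hfc2 : ∀ g h : ℝ × ℝ → ℝ, Continuous g → Continuous h →
      Continuous fun z => f (g z) (h z) := fun g h hg hh => hfc.comp (hg.prodMk hh)
  have hper2 : ∀ u, Function.Periodic (f u) (2 * π) := by
    intro u v
    simp only [hf, cos_add_two_pi]
    rw [← EE_int_mul x.2 (x.1 * u + x.2 * v + 4 * t * (cos u + cos v) ^ 2)]; congr 1; ring
  have hper : ∀ p, Function.Periodic (fun u => f u (p - u)) (2 * π) := by
    intro p u
    simp only [hf, cos_add_two_pi]
    rw [show p - (u + 2 * π) = p - u - 2 * π by ring, cos_sub_two_pi,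
      ← EE_int_mul (x.1 - x.2)]
    push_cast
    rw [← EE_int_mul (x.1 - x.2) (x.1 * u + x.2 * (p - u) + 4 * t * (cos u + cos (p - u)) ^ 2),
      ← EE_int_mul (x.2 - x.1)]
    congr 1; push_cast; ring
  have hom : ∀ ξ : ℝ × ℝ, Complex.exp (Complex.I *
        (((x.1 : ℝ) * ξ.1 + (x.2 : ℝ) * ξ.2 + (om ξ ^ 4 + (-8) * om ξ ^ 2) * t : ℝ) : ℂ))
      = EE (-16 * t) * f ξ.1 ξ.2 := by
    intro ξ
    have h2 : om ξ ^ 2 = (2 - 2 * cos ξ.1) + (2 - 2 * cos ξ.2) :=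
      sq_sqrt (by linarith [cos_le_one ξ.1, cos_le_one ξ.2])
    simp only [hf]
    rw [← EE_add, EE, show om ξ ^ 4 = (om ξ ^ 2) ^ 2 by ring, h2]
    congr 3; ring
  have hsw : ∀ (g : ℝ → ℝ → ℂ) (a b c d : ℝ), Continuous (Function.uncurry g) →
      ∫ u in a..b, ∫ v in c..d, g u v = ∫ v in c..d, ∫ u in a..b, g u v := by
    intro g a b c d hg
    refine intervalIntegral_intervalIntegral_swap ?_
    exact (hg.continuousOn.integrableOn_compact (μ := volume)
      (isCompact_uIcc.prod isCompact_uIcc)).mono_set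
      (Set.prod_mono Set.uIoc_subset_uIcc Set.uIoc_subset_uIcc)
  rw [G2]
  simp_rw [hom]
  rw [integral_const_mul, norm_mul, norm_mul, EE_norm, one_mul, Complex.norm_real,
    norm_of_nonneg (by positivity)]
  congr 1
  have e1 : ∫ ξ in Set.Icc (-π) π ×ˢ Set.Icc (-π) π, f ξ.1 ξ.2
      = ∫ u in (-π)..π, ∫ v in (-π)..π, f u v := by
    rw [Measure.volume_eq_prod, setIntegral_prod (fun ξ : ℝ × ℝ => f ξ.1 ξ.2)
      (hfc.continuousOn.integrableOn_compact (isCompact_Icc.prod isCompact_Icc))]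
    simp only [intervalIntegral.integral_of_le hpp, integral_Icc_eq_integral_Ioc]
  have e2 : ∀ u, ∫ v in (-π)..π, f u v = ∫ p in (-π)..π, f u (p - u) := by
    intro u
    rw [← per_shift _ (hper2 u) (-u)]; simp only [sub_eq_add_neg]
  have e3 : ∀ p, ∫ u in (-π)..π, f u (p - u) = ∫ b in (-π)..π, f (p / 2 + b) (p / 2 - b) := by
    intro p
    rw [← per_shift _ (hper p) (p / 2)]
    congr 1; ext b; congr 1 <;> ring
  have e4 := intervalIntegral.integral_comp_div (a := -π) (b := π)
    (fun a => ∫ b in (-π)..π, f (a + b) (a - b)) (c := 2) two_ne_zero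
  rw [e1]
  simp_rw [e2]
  rw [hsw (fun u p => f u (p - u)) _ _ _ _ (hfc2 _ _ (by fun_prop) (by fun_prop))]
  simp_rw [e3]
  rw [e4, hsw (fun a b => f (a + b) (a - b)) _ _ _ _ (hfc2 _ _ (by fun_prop) (by fun_prop)),
    norm_smul, norm_two, neg_div]
  congr 3
  ext b; congr 1; ext a
  simp only [hf]
  congr 1
  rw [cos_add, cos_sub]; ring

open Real in
lemma G2_le_one (x : ℤ × ℤ) (t : ℝ) : ‖G2 (-8) x t‖ ≤ 1 := by
  rw [G2, norm_mul, Complex.norm_real, norm_of_nonneg (by positivity)]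
  have h : ‖∫ ξ in Set.Icc (-π) π ×ˢ Set.Icc (-π) π,
      Complex.exp (Complex.I *
        (((x.1 : ℝ) * ξ.1 + (x.2 : ℝ) * ξ.2 + (om ξ ^ 4 + (-8) * om ξ ^ 2) * t : ℝ) : ℂ))‖
      ≤ 1 * volume.real (Set.Icc (-π) π ×ˢ Set.Icc (-π) π) := by
    refine norm_setIntegral_le_of_norm_le_const
      (isCompact_Icc.prod isCompact_Icc).measure_lt_top fun ξ _ => ?_
    exact (EE_norm _).le
  have hv : volume.real (Set.Icc (-π) π ×ˢ Set.Icc (-π) π) = (2 * π) ^ 2 := by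
    rw [Measure.volume_eq_prod, measureReal_prod_prod, volume_real_Icc_of_le (by linarith [pi_pos])]
    ring
  rw [hv, one_mul] at h
  calc _ ≤ ((2 * π) ^ 2)⁻¹ * (2 * π) ^ 2 := by gcongr
    _ = 1 := inv_mul_cancel₀ (by positivity)

/-- For `γ = −8` the fundamental solution on `ℤ²` decays like `(1+|t|)^{-1/2} log(2+|t|)`. -/
theorem stmt2 :
    ∃ C > (0 : ℝ), ∀ (x : ℤ × ℤ) (t : ℝ),
      ‖G2 (-8) x t‖ ≤ C * (1 + |t|) ^ (-(1 / 2 : ℝ)) * Real.log (2 + |t|) := by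
  open Real in
  set C1 : ℝ := 1 + exp 1 * (√π * (2 * π)) with hC1
  have hC1p : 0 < C1 := by positivity
  refine ⟨√2 * (π + C1), by positivity, fun x t => ?_⟩
  have h0 := abs_nonneg t
  have hr : (1 + |t|) ^ (-(1 / 2 : ℝ)) = (√(1 + |t|))⁻¹ := by
    rw [rpow_neg (by positivity), sqrt_eq_rpow]
  rw [hr]
  rcases lt_or_ge |t| 1 with ht | ht
  · refine (G2_le_one x t).trans ?_
    have h1 : √(1 + |t|) ≤ √2 := sqrt_le_sqrt (by linarith)
    have h2 : log 2 ≤ log (2 + |t|) := log_le_log (by norm_num) (by linarith)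
    have h3 := log_two_gt_d9
    have h4 : 1 ≤ √2 * (√(1 + |t|))⁻¹ := by
      rw [← div_eq_mul_inv, one_le_div (by positivity)]; exact h1
    have h5 : 1 ≤ (π + C1) * log (2 + |t|) := by nlinarith [pi_gt_three]
    calc (1 : ℝ) ≤ (√2 * (√(1 + |t|))⁻¹) * ((π + C1) * log (2 + |t|)) := one_le_mul_of_one_le_of_one_le h4 h5
      _ = _ := by ring
  · have ht0 : t ≠ 0 := by rintro rfl; norm_num at ht
    set s := √|t| with hs
    have hs1 : 1 ≤ s := by rw [hs]; exact one_le_sqrt.2 ht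
    have hss : s ^ 2 = |t| := sq_sqrt h0
    have hq := fun m n => quarter m n (16 * t) (1 / (2 * s)) (by positivity) (by positivity)
      (by rw [div_le_div_iff₀ (by positivity) (by norm_num)]; nlinarith [pi_gt_three])
    have hb := full_bd _ _ hq (x.1 + x.2) (x.1 - x.2)
    have h16 : √|16 * t| = 4 * s := by
      rw [abs_mul, sqrt_mul (abs_nonneg _), ← hs]; congr 1
      rw [abs_of_pos (by norm_num), show (16 : ℝ) = 4 ^ 2 by norm_num]; exact sqrt_sq (by norm_num)
    have hll : log (π / (2 * (1 / (2 * s)))) = log (π * s) := by congr 1; field_simp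
    rw [h16, hll, ← hC1] at hb
    have hlog : log (π * s) ≤ 2 * log (2 + |t|) := by
      rw [show (2 : ℝ) * log (2 + |t|) = log ((2 + |t|) ^ 2) by rw [log_pow]; push_cast; ring]
      refine log_le_log (by positivity) ?_
      rw [← hss]; nlinarith [pi_lt_four, pi_pos]
    have hlog1 : 1 ≤ log (2 + |t|) := by
      rw [le_log_iff_exp_le (by positivity)]
      linarith [exp_one_lt_d9]
    have hK : 2 * π * (1 / (2 * s)) + C1 * log (π * s) / (4 * s) ≤ (π + C1) * log (2 + |t|) / s := by
      have e : 2 * π * (1 / (2 * s)) + C1 * log (π * s) / (4 * s) = (π + C1 * log (π * s) / 4) / s := by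
        field_simp
      rw [e]
      refine div_le_div_of_nonneg_right ?_ (by positivity)
      nlinarith [pi_pos]
    have hsq : s⁻¹ ≤ √2 * (√(1 + |t|))⁻¹ := by
      have : √(1 + |t|) ≤ √2 * s := by
        rw [hs, ← sqrt_mul (by norm_num)]; exact sqrt_le_sqrt (by linarith)
      rw [inv_le_iff_one_le_mul₀ (by positivity), mul_right_comm, ← div_eq_mul_inv,
        one_le_div (by positivity)]
      exact this
    rw [G2_eq]
    have hpi : ((2 * π) ^ 2)⁻¹ * 16 ≤ 1 := by
      rw [inv_mul_le_iff₀ (by positivity)]; nlinarith [pi_gt_three]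
    calc _ ≤ ((2 * π) ^ 2)⁻¹ * (2 * (8 * ((π + C1) * log (2 + |t|) / s))) := by
          gcongr
          exact hb.trans (by gcongr)
      _ = (((2 * π) ^ 2)⁻¹ * 16) * ((π + C1) * log (2 + |t|) / s) := by ring
      _ ≤ 1 * ((π + C1) * log (2 + |t|) / s) := by gcongr
      _ = (π + C1) * log (2 + |t|) * s⁻¹ := by ring
      _ ≤ (π + C1) * log (2 + |t|) * (√2 * (√(1 + |t|))⁻¹) := by gcongr
      _ = _ := by ring
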